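/- (Key second-order inequality, complex noiseless case.) Suppose the cost matrix is L̂ = L ⊗ I_r (all Z_i = I_r, no noise). Then every second-order critical point Y of the complex rank-p problem satisfies (4p − 6r) Σ_{i,j=1}^n L_ij Re tr(Y_i Y_j*) + (1/2) Σ_{i,j=1}^n A_ij ‖Y_i − Y_j‖_F⁴ ≤ 0; in particular, if G is connected and 2p ≥ 3r, then Y_1 = Y_2 = ⋯ = Y_n. -/

import Mathlib

open Matrix MeasureTheory ProbabilityTheory
open scoped Kronecker BigOperators ComplexOrder

namespace SyncPaper

variable {α : Type*}

/-- The `i`-th `r × p` row-block of a block matrix `Y ∈ α^{rn × p}`. -/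
def blk {n r p : ℕ} (Y : Matrix (Fin n × Fin r) (Fin p) α) (i : Fin n) :
    Matrix (Fin r) (Fin p) α :=
  Matrix.of fun a b => Y (i, a) b

/-- `Y` is feasible for the complex problem: every `r × p` row-block satisfies `Y_i Y_i* = I_r`. -/
def FeasibleC {n r p : ℕ} (Y : Matrix (Fin n × Fin r) (Fin p) ℂ) : Prop :=
  ∀ i, blk Y i * (blk Y i)ᴴ = 1

/-- Hermitian block-diagonal projection: keeps the Hermitian part of each `r × r`
diagonal block and zeroes out all off-diagonal blocks. -/
noncomputable def SBDC {n r : ℕ} (M : Matrix (Fin n × Fin r) (Fin n × Fin r) ℂ) :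
    Matrix (Fin n × Fin r) (Fin n × Fin r) ℂ :=
  Matrix.of fun q q' => if q.1 = q'.1 then (M q q' + star (M q' q)) / 2 else 0

/-- The matrix `S(Y) = L̂ − SBD(L̂ Y Y*)`. -/
noncomputable def SmatC {n r p : ℕ} (Lhat : Matrix (Fin n × Fin r) (Fin n × Fin r) ℂ)
    (Y : Matrix (Fin n × Fin r) (Fin p) ℂ) :
    Matrix (Fin n × Fin r) (Fin n × Fin r) ℂ :=
  Lhat - SBDC (Lhat * Y * Yᴴ)

/-- Second-order critical point of the complex rank-`p` problem
`min Re tr(L̂ (Y Y*)*)` over feasible `Y`. -/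
def IsSecondOrderCriticalC {n r p : ℕ} (Lhat : Matrix (Fin n × Fin r) (Fin n × Fin r) ℂ)
    (Y : Matrix (Fin n × Fin r) (Fin p) ℂ) : Prop :=
  FeasibleC Y ∧ SmatC Lhat Y * Y = 0 ∧
    ∀ Ydot : Matrix (Fin n × Fin r) (Fin p) ℂ,
      (∀ i, blk Ydot i * (blk Y i)ᴴ + blk Y i * (blk Ydot i)ᴴ = 0) →
      0 ≤ ((SmatC Lhat Y * Ydot * Ydotᴴ).trace).re

/-- The stacked ground truth `Z ∈ ℂ^{rn × r}`. -/
def ZstackC {n r : ℕ} (Zb : Fin n → Matrix (Fin r) (Fin r) ℂ) :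
    Matrix (Fin n × Fin r) (Fin r) ℂ :=
  Matrix.of fun q b => Zb q.1 q.2 b

/-- The block-diagonal matrix `D` with diagonal blocks `Z_1, …, Z_n`. -/
def DmatC {n r : ℕ} (Zb : Fin n → Matrix (Fin r) (Fin r) ℂ) :
    Matrix (Fin n × Fin r) (Fin n × Fin r) ℂ :=
  Matrix.of fun q q' => if q.1 = q'.1 then Zb q.1 q.2 q'.2 else 0

/-- `L_Z = D (L ⊗ I_r) D*`. -/
noncomputable def LZmatC {n r : ℕ} (L : Matrix (Fin n) (Fin n) ℂ) (Zb : Fin n → Matrix (Fin r) (Fin r) ℂ) :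
    Matrix (Fin n × Fin r) (Fin n × Fin r) ℂ :=
  DmatC Zb * (L ⊗ₖ (1 : Matrix (Fin r) (Fin r) ℂ)) * (DmatC Zb)ᴴ

/-- Squared Frobenius norm of a complex matrix. -/
def frobSqC {m m' : Type*} [Fintype m] [Fintype m'] (M : Matrix m m' ℂ) : ℝ :=
  ∑ i, ∑ j, Complex.normSq (M i j)

end SyncPaper

namespace SyncPaper

/-- Projected direction at `Y` (one block). -/
noncomputable def dirC {r p : ℕ} (Γ Y : Matrix (Fin r) (Fin p) ℂ) : Matrix (Fin r) (Fin p) ℂ :=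
  Γ - (1 / 2 : ℂ) • ((Γ * Yᴴ + Y * Γᴴ) * Y)

noncomputable def QC {r p : ℕ} (Y : Matrix (Fin r) (Fin p) ℂ) : Matrix (Fin p) (Fin p) ℂ :=
  1 - (1 / 2 : ℂ) • (Yᴴ * Y)

lemma dirC_tangent {r p : ℕ} (Γ Y : Matrix (Fin r) (Fin p) ℂ) (h : Y * Yᴴ = 1) :
    dirC Γ Y * Yᴴ + Y * (dirC Γ Y)ᴴ = 0 := by
  have e1 : dirC Γ Y * Yᴴ = (1 / 2 : ℂ) • (Γ * Yᴴ) - (1 / 2 : ℂ) • (Y * Γᴴ) := by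
    simp only [dirC, Matrix.sub_mul, Matrix.smul_mul, Matrix.mul_assoc, h, Matrix.mul_one]
    module
  have e2 : Y * (dirC Γ Y)ᴴ = (dirC Γ Y * Yᴴ)ᴴ := by simp
  rw [e2, e1]
  simp [conjTranspose_smul]

lemma dirC_eq {r p : ℕ} (Γ Y : Matrix (Fin r) (Fin p) ℂ) :
    dirC Γ Y = Γ * QC Y - (1 / 2 : ℂ) • (Y * Γᴴ * Y) := by
  simp only [dirC, QC, Matrix.mul_sub, Matrix.mul_one, Matrix.mul_smul, Matrix.add_mul,
    Matrix.mul_assoc]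
  module

lemma dirC_pair {r p : ℕ} (E Y Z : Matrix (Fin r) (Fin p) ℂ) :
    dirC E Y * (dirC E Z)ᴴ + dirC (Complex.I • E) Y * (dirC (Complex.I • E) Z)ᴴ
      = (2 : ℂ) • (E * (QC Y * (QC Z)ᴴ) * Eᴴ)
        + (1 / 2 : ℂ) • (Y * (Eᴴ * (Y * Zᴴ) * E) * Zᴴ) := by
  have hI : dirC (Complex.I • E) Y = Complex.I • (E * QC Y + (1 / 2 : ℂ) • (Y * Eᴴ * Y)) := by
    rw [dirC_eq]; simp [conjTranspose_smul, smul_smul]; module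
  have hI2 : dirC (Complex.I • E) Z = Complex.I • (E * QC Z + (1 / 2 : ℂ) • (Z * Eᴴ * Z)) := by
    rw [dirC_eq]; simp [conjTranspose_smul, smul_smul]; module
  rw [hI, hI2, dirC_eq, dirC_eq]
  simp only [conjTranspose_smul, conjTranspose_add, conjTranspose_sub, conjTranspose_mul,
    conjTranspose_conjTranspose, Matrix.smul_mul, Matrix.mul_smul, Matrix.add_mul, Matrix.mul_add,
    Matrix.sub_mul, Matrix.mul_sub, smul_smul, smul_add, smul_sub, Matrix.mul_assoc]
  have h1 : star (1 / 2 : ℂ) = 1 / 2 := by simp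
  have h2 : star Complex.I * Complex.I = 1 := by simp
  have h3 : Complex.I * star Complex.I = 1 := by simp
  simp only [h1]
  have h4 := Complex.I_mul_I
  match_scalars <;> ring_nf <;> simp <;> norm_num
  · linear_combination (-1 / 2 : ℂ) * h4
  · linear_combination (-1 / 4 : ℂ) * h4

lemma sum_single_left {r p : ℕ} (M : Matrix (Fin p) (Fin p) ℂ) :
    ∑ a : Fin r, ∑ b : Fin p, (Matrix.single a b (1 : ℂ)) * M * (Matrix.single a b (1 : ℂ))ᴴ
      = M.trace • (1 : Matrix (Fin r) (Fin r) ℂ) := by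
  simp only [conjTranspose_single, star_one, Matrix.single_mul_mul_single, one_mul, mul_one]
  ext x y
  simp only [Matrix.sum_apply, Matrix.single_apply, Matrix.smul_apply, Matrix.one_apply,
    Matrix.trace, Matrix.diag_apply]
  by_cases h : x = y
  · subst h; simp
  · have : ∀ a : Fin r, ¬ (a = x ∧ a = y) := by rintro a ⟨rfl, rfl⟩; exact h rfl
    simp [h, this]

lemma sum_single_right {r p : ℕ} (M : Matrix (Fin r) (Fin r) ℂ) :
    ∑ a : Fin r, ∑ b : Fin p, (Matrix.single a b (1 : ℂ))ᴴ * M * (Matrix.single a b (1 : ℂ))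
      = M.trace • (1 : Matrix (Fin p) (Fin p) ℂ) := by
  rw [Finset.sum_comm, ← sum_single_left (r := p) M]
  simp [conjTranspose_single]

noncomputable def WC {r p : ℕ} (Y Z : Matrix (Fin r) (Fin p) ℂ) : Matrix (Fin r) (Fin r) ℂ :=
  (2 * (QC Y * (QC Z)ᴴ).trace) • (1 : Matrix (Fin r) (Fin r) ℂ)
    + ((1 / 2 : ℂ) * (Y * Zᴴ).trace) • (Y * Zᴴ)

lemma sum_dir {r p : ℕ} (Y Z : Matrix (Fin r) (Fin p) ℂ) :
    ∑ a : Fin r, ∑ b : Fin p,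
      (dirC (Matrix.single a b 1) Y * (dirC (Matrix.single a b 1) Z)ᴴ
      + dirC (Complex.I • Matrix.single a b 1) Y * (dirC (Complex.I • Matrix.single a b 1) Z)ᴴ)
      = WC Y Z := by
  simp only [dirC_pair, Finset.sum_add_distrib, ← Finset.smul_sum, ← Matrix.sum_mul,
    ← Matrix.mul_sum]
  rw [sum_single_left, sum_single_right]
  simp [WC, smul_smul]

lemma trace_QC {r p : ℕ} (Y Z : Matrix (Fin r) (Fin p) ℂ) (hY : Y * Yᴴ = 1) (hZ : Z * Zᴴ = 1) :
    (QC Y * (QC Z)ᴴ).trace = p - r + (1 / 4 : ℂ) * ((Y * Zᴴ) * (Y * Zᴴ)ᴴ).trace := by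
  have e1 : (Yᴴ * Y).trace = r := by rw [trace_mul_comm, hY]; simp
  have e2 : (Zᴴ * Z).trace = r := by rw [trace_mul_comm, hZ]; simp
  have e3 : (Yᴴ * Y * (Zᴴ * Z)).trace = ((Y * Zᴴ) * (Y * Zᴴ)ᴴ).trace := by
    rw [Matrix.mul_assoc, trace_mul_comm]; simp [Matrix.mul_assoc]
  have h1 : star (1 / 2 : ℂ) = 1 / 2 := by simp
  simp only [QC, conjTranspose_sub, conjTranspose_one, conjTranspose_smul, conjTranspose_mul,
    conjTranspose_conjTranspose, h1, Matrix.sub_mul, Matrix.mul_sub, Matrix.one_mul,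
    Matrix.mul_one, Matrix.smul_mul, Matrix.mul_smul, trace_sub, trace_smul, e1, e2, e3,
    trace_one, Fintype.card_fin, smul_eq_mul]
  ring

lemma WC_self {r p : ℕ} (Y : Matrix (Fin r) (Fin p) ℂ) (hY : Y * Yᴴ = 1) :
    WC Y Y = (2 * p - r : ℂ) • (1 : Matrix (Fin r) (Fin r) ℂ) := by
  rw [WC, trace_QC Y Y hY hY, hY]
  simp only [conjTranspose_one, Matrix.mul_one, trace_one, Fintype.card_fin, ← add_smul]
  congr 1; ring

/-- real part of the trace of X X* -/
lemma trace_mul_conj {r : ℕ} (X : Matrix (Fin r) (Fin r) ℂ) :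
    (X * Xᴴ).trace = ((frobSqC X : ℝ) : ℂ) := by
  simp [frobSqC, Matrix.trace, Matrix.mul_apply, Complex.mul_conj]

lemma trace_mul_conj' {r p : ℕ} (X : Matrix (Fin r) (Fin p) ℂ) :
    (X * Xᴴ).trace = ((frobSqC X : ℝ) : ℂ) := by
  simp [frobSqC, Matrix.trace, Matrix.mul_apply, Complex.mul_conj]

lemma trace_WC_re {r p : ℕ} (Y Z : Matrix (Fin r) (Fin p) ℂ) (hY : Y * Yᴴ = 1)
    (hZ : Z * Zᴴ = 1) :
    (WC Y Z).trace.re = 2 * r * (p - r) + r / 2 * frobSqC (Y * Zᴴ)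
      + 1 / 2 * ((Y * Zᴴ).trace.re ^ 2 - (Y * Zᴴ).trace.im ^ 2) := by
  rw [WC, trace_QC Y Z hY hZ, trace_mul_conj]
  simp [pow_two]
  ring

lemma trace_block {n r p : ℕ} (S : Matrix (Fin n × Fin r) (Fin n × Fin r) ℂ)
    (D : Matrix (Fin n × Fin r) (Fin p) ℂ) :
    (S * D * Dᴴ).trace = ∑ i, ∑ j,
      ((Matrix.of fun a b => S (i, a) (j, b) : Matrix (Fin r) (Fin r) ℂ)
        * (blk D j * (blk D i)ᴴ)).trace := by
  rw [Matrix.mul_assoc]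
  simp only [Matrix.trace, Matrix.diag_apply, Matrix.mul_apply (M := S), Fintype.sum_prod_type]
  refine Finset.sum_congr rfl fun i _ => ?_
  rw [Finset.sum_comm]
  refine Finset.sum_congr rfl fun j _ => ?_
  refine Finset.sum_congr rfl fun a _ => ?_
  rw [Matrix.mul_apply]
  rfl

/-- stacked direction -/
noncomputable def dirS {n r p : ℕ} (Γ : Matrix (Fin r) (Fin p) ℂ)
    (Y : Matrix (Fin n × Fin r) (Fin p) ℂ) : Matrix (Fin n × Fin r) (Fin p) ℂ :=
  Matrix.of fun q b => dirC Γ (blk Y q.1) q.2 b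

lemma blk_dirS {n r p : ℕ} (Γ : Matrix (Fin r) (Fin p) ℂ)
    (Y : Matrix (Fin n × Fin r) (Fin p) ℂ) (i : Fin n) : blk (dirS Γ Y) i = dirC Γ (blk Y i) := rfl

lemma sum_rot {α β γ δ : Type*} [Fintype α] [Fintype β] [Fintype γ] [Fintype δ]
    (F : α → β → γ → δ → ℂ) :
    ∑ i, ∑ j, ∑ a, ∑ b, F i j a b = ∑ a, ∑ b, ∑ i, ∑ j, F i j a b := by
  have h : ∀ i, ∑ j, ∑ a, ∑ b, F i j a b = ∑ a, ∑ b, ∑ j, F i j a b := fun i => by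
    rw [Finset.sum_comm]
    exact Finset.sum_congr rfl fun a _ => Finset.sum_comm
  simp only [h]
  rw [Finset.sum_comm]
  exact Finset.sum_congr rfl fun a _ => Finset.sum_comm

lemma sum_blocks_nonneg {n r p : ℕ} (S : Matrix (Fin n × Fin r) (Fin n × Fin r) ℂ)
    (Y : Matrix (Fin n × Fin r) (Fin p) ℂ) (hY : FeasibleC Y)
    (h : ∀ Ydot : Matrix (Fin n × Fin r) (Fin p) ℂ,
      (∀ i, blk Ydot i * (blk Y i)ᴴ + blk Y i * (blk Ydot i)ᴴ = 0) →
      0 ≤ ((S * Ydot * Ydotᴴ).trace).re) :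
    0 ≤ (∑ i, ∑ j, ((Matrix.of fun a b => S (i, a) (j, b) : Matrix (Fin r) (Fin r) ℂ)
        * WC (blk Y j) (blk Y i)).trace).re := by
  have key : ∀ Γ : Matrix (Fin r) (Fin p) ℂ, 0 ≤ ((S * dirS Γ Y * (dirS Γ Y)ᴴ).trace).re :=
    fun Γ => h _ fun i => by rw [blk_dirS]; exact dirC_tangent _ _ (hY i)
  have e : (∑ i, ∑ j, ((Matrix.of fun a b => S (i, a) (j, b) : Matrix (Fin r) (Fin r) ℂ)
        * WC (blk Y j) (blk Y i)).trace) = ∑ a : Fin r, ∑ b : Fin p,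
        ((S * dirS (Matrix.single a b 1) Y * (dirS (Matrix.single a b 1) Y)ᴴ).trace
        + (S * dirS (Complex.I • Matrix.single a b 1) Y
            * (dirS (Complex.I • Matrix.single a b 1) Y)ᴴ).trace) := by
    simp only [trace_block, blk_dirS, ← Finset.sum_add_distrib, ← trace_add, ← Matrix.mul_add]
    simp only [← sum_dir, Matrix.mul_sum, trace_sum]
    exact sum_rot _
  rw [e, Complex.re_sum]
  refine Finset.sum_nonneg fun a _ => ?_
  rw [Complex.re_sum]
  refine Finset.sum_nonneg fun b _ => ?_
  rw [Complex.add_re]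
  exact add_nonneg (key _) (key _)

lemma lap_cast {n : ℕ} (G : SimpleGraph (Fin n)) [DecidableRel G.Adj] (i j : Fin n) :
    G.lapMatrix ℂ i j = ((G.lapMatrix ℝ i j : ℝ) : ℂ) := by
  simp only [SimpleGraph.lapMatrix, SimpleGraph.degMatrix, Matrix.sub_apply,
    Matrix.diagonal_apply, SimpleGraph.adjMatrix_apply]
  split_ifs <;> simp

lemma lap_sum {n : ℕ} (G : SimpleGraph (Fin n)) [DecidableRel G.Adj] (f : Fin n → Fin n → ℝ)
    (c : ℝ) (hf : ∀ i, f i i = c) :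
    ∑ i, ∑ j, G.lapMatrix ℝ i j * f i j = ∑ i, ∑ j, G.adjMatrix ℝ i j * (c - f i j) := by
  refine Finset.sum_congr rfl fun i _ => ?_
  simp only [SimpleGraph.lapMatrix, SimpleGraph.degMatrix, Matrix.sub_apply,
    Matrix.diagonal_apply, sub_mul, Finset.sum_sub_distrib, mul_sub, ← Finset.sum_mul]
  simp only [hf, SimpleGraph.adjMatrix_apply, ite_mul, zero_mul, Finset.sum_ite_eq,
    Finset.mem_univ, if_true, Finset.sum_boole]
  rw [← SimpleGraph.card_neighborFinset_eq_degree, SimpleGraph.neighborFinset_eq_filter]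

lemma trace_Sb {n r p : ℕ} (G : SimpleGraph (Fin n)) [DecidableRel G.Adj]
    (Y : Matrix (Fin n × Fin r) (Fin p) ℂ) (hY : FeasibleC Y) :
    (∑ i, ∑ j, ((Matrix.of fun a b =>
          SmatC ((G.lapMatrix ℂ) ⊗ₖ (1 : Matrix (Fin r) (Fin r) ℂ)) Y (i, a) (j, b) :
            Matrix (Fin r) (Fin r) ℂ) * WC (blk Y j) (blk Y i)).trace).re
      = ∑ i, ∑ j, G.lapMatrix ℝ i j * (WC (blk Y j) (blk Y i)).trace.re
        - (2 * p - r) * ∑ i, ∑ j, G.lapMatrix ℝ i j * (blk Y i * (blk Y j)ᴴ).trace.re := by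
  set M := (G.lapMatrix ℂ) ⊗ₖ (1 : Matrix (Fin r) (Fin r) ℂ) * Y * Yᴴ with hM
  have hMd : ∀ i a, M (i, a) (i, a) = ∑ j, G.lapMatrix ℂ i j * (blk Y j * (blk Y i)ᴴ) a a := by
    intro i a
    rw [hM, Matrix.mul_assoc, Matrix.mul_apply, Fintype.sum_prod_type]
    refine Finset.sum_congr rfl fun j _ => ?_
    simp only [kroneckerMap_apply, Matrix.one_apply, mul_ite, mul_one, mul_zero, ite_mul, zero_mul]
    simp
    left
    rfl
  have hsplit : ∀ i j, ((Matrix.of fun a b =>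
          SmatC ((G.lapMatrix ℂ) ⊗ₖ (1 : Matrix (Fin r) (Fin r) ℂ)) Y (i, a) (j, b) :
            Matrix (Fin r) (Fin r) ℂ) * WC (blk Y j) (blk Y i)).trace
      = G.lapMatrix ℂ i j * (WC (blk Y j) (blk Y i)).trace
        - if i = j then (2 * p - r : ℂ) * ∑ a, (M (i, a) (i, a) + star (M (i, a) (i, a))) / 2
          else 0 := by
    intro i j
    have e : (Matrix.of fun a b =>
          SmatC ((G.lapMatrix ℂ) ⊗ₖ (1 : Matrix (Fin r) (Fin r) ℂ)) Y (i, a) (j, b) :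
            Matrix (Fin r) (Fin r) ℂ) = G.lapMatrix ℂ i j • 1
          - Matrix.of fun a b => SBDC M (i, a) (j, b) := by
      ext a b
      simp [SmatC, hM, Matrix.one_apply]
    rw [e, Matrix.sub_mul, trace_sub, Matrix.smul_mul, Matrix.one_mul, trace_smul, smul_eq_mul]
    congr 1
    split_ifs with hij
    · subst hij
      rw [WC_self _ (hY i), Matrix.mul_smul, Matrix.mul_one, trace_smul, smul_eq_mul]
      simp [Matrix.trace, SBDC]
    · have : (Matrix.of fun a b => SBDC M (i, a) (j, b) : Matrix (Fin r) (Fin r) ℂ) = 0 := by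
        ext a b; simp [SBDC, hij]
      rw [this]; simp
  have hre : ∀ i, ((2 * p - r : ℂ) * ∑ a, (M (i, a) (i, a) + star (M (i, a) (i, a))) / 2).re
      = (2 * p - r) * ∑ j, G.lapMatrix ℝ i j * (blk Y i * (blk Y j)ᴴ).trace.re := by
    intro i
    have e1 : ∀ a, (M (i, a) (i, a) + star (M (i, a) (i, a))) / 2
        = (((M (i, a) (i, a)).re : ℝ) : ℂ) := by
      intro a
      rw [Complex.star_def, Complex.add_conj]; push_cast; ring
    simp only [e1]
    have e2 : (2 * p - r : ℂ) = ((2 * p - r : ℝ) : ℂ) := by push_cast; ring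
    rw [e2, ← Complex.ofReal_sum, ← Complex.ofReal_mul, Complex.ofReal_re]
    congr 1
    simp only [hMd, Complex.re_sum, lap_cast, Complex.re_ofReal_mul]
    rw [Finset.sum_comm]
    refine Finset.sum_congr rfl fun j _ => ?_
    rw [← Finset.mul_sum]
    congr 1
    have e3 : (blk Y i * (blk Y j)ᴴ) = (blk Y j * (blk Y i)ᴴ)ᴴ := by simp
    rw [e3, trace_conjTranspose]
    simp [Matrix.trace]
  simp only [hsplit, Finset.sum_sub_distrib, Complex.sub_re]
  congr 1
  · simp [lap_cast, Complex.re_sum]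
  · simp only [Finset.sum_ite_eq, Finset.mem_univ, if_true]
    rw [Complex.re_sum, Finset.mul_sum]
    exact Finset.sum_congr rfl fun i _ => hre i

lemma cs_trace {r : ℕ} (X : Matrix (Fin r) (Fin r) ℂ) :
    X.trace.re ^ 2 + X.trace.im ^ 2 ≤ r * frobSqC X := by
  have h1 : X.trace.re ^ 2 ≤ r * ∑ a, (X a a).re ^ 2 := by
    have := sq_sum_le_card_mul_sum_sq (s := Finset.univ) (f := fun a => (X a a).re)
    simpa [Matrix.trace] using this
  have h2 : X.trace.im ^ 2 ≤ r * ∑ a, (X a a).im ^ 2 := by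
    have := sq_sum_le_card_mul_sum_sq (s := Finset.univ) (f := fun a => (X a a).im)
    simpa [Matrix.trace] using this
  have h3 : ∑ a, (X a a).re ^ 2 + ∑ a, (X a a).im ^ 2 ≤ frobSqC X := by
    rw [← Finset.sum_add_distrib, frobSqC]
    refine Finset.sum_le_sum fun a _ => ?_
    have := Finset.single_le_sum (f := fun b => Complex.normSq (X a b))
      (fun b _ => Complex.normSq_nonneg _) (Finset.mem_univ a)
    rw [Complex.normSq_apply] at this
    nlinarith
  have := mul_le_mul_of_nonneg_left h3 (Nat.cast_nonneg (α := ℝ) r)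
  linarith

lemma frob_sub {r p : ℕ} (Y Z : Matrix (Fin r) (Fin p) ℂ) (hY : Y * Yᴴ = 1) (hZ : Z * Zᴴ = 1) :
    frobSqC (Y - Z) = 2 * (r - (Y * Zᴴ).trace.re) := by
  have h := congrArg Complex.re (trace_mul_conj' (Y - Z))
  rw [Complex.ofReal_re] at h
  rw [← h]
  have e3 : (Z * Yᴴ) = (Y * Zᴴ)ᴴ := by simp
  simp only [conjTranspose_sub, Matrix.sub_mul, Matrix.mul_sub, hY, hZ, e3, trace_sub,
    trace_conjTranspose]
  simp
  ring

lemma frob_nonneg {r p : ℕ} (Y : Matrix (Fin r) (Fin p) ℂ) : 0 ≤ frobSqC Y :=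
  Finset.sum_nonneg fun _ _ => Finset.sum_nonneg fun _ _ => Complex.normSq_nonneg _

lemma frob_eq_zero {r p : ℕ} (Y : Matrix (Fin r) (Fin p) ℂ) (h : frobSqC Y = 0) : Y = 0 := by
  have := trace_mul_conj' Y
  rw [h, Complex.ofReal_zero] at this
  exact (Matrix.trace_mul_conjTranspose_self_eq_zero_iff).1 this

lemma frob_one_mul {r p : ℕ} (Y : Matrix (Fin r) (Fin p) ℂ) (hY : Y * Yᴴ = 1) :
    frobSqC (Y * Yᴴ) = r := by
  have h := congrArg Complex.re (trace_mul_conj (Y * Yᴴ))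
  rw [Complex.ofReal_re, hY] at h
  rw [hY, ← h]; simp

end SyncPaper

namespace SyncPaper

/-- **Key second-order inequality, complex noiseless case.**  If the cost matrix is
`L̂ = L ⊗ I_r` (all `Z_i = I_r`, no noise), then every second-order critical point `Y` of the
complex rank-`p` problem satisfies
`(4p − 6r) Σ_{ij} L_ij Re tr(Y_i Y_j*) + (1/2) Σ_{ij} A_ij ‖Y_i − Y_j‖_F⁴ ≤ 0`;
in particular, if `G` is connected and `2p ≥ 3r`, then `Y_1 = ⋯ = Y_n`. -/
theorem complex_second_order_inequality
    (n r p : ℕ) (hn : 1 ≤ n) (hr : 1 ≤ r) (hrp : r ≤ p)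
    (G : SimpleGraph (Fin n)) [DecidableRel G.Adj]
    (Lhat : Matrix (Fin n × Fin r) (Fin n × Fin r) ℂ)
    (hLhat : Lhat = (G.lapMatrix ℂ) ⊗ₖ (1 : Matrix (Fin r) (Fin r) ℂ))
    (Y : Matrix (Fin n × Fin r) (Fin p) ℂ)
    (hY : IsSecondOrderCriticalC Lhat Y) :
    ((4 * (p : ℝ) - 6 * r) *
        (∑ i, ∑ j, G.lapMatrix ℝ i j * ((blk Y i * (blk Y j)ᴴ).trace).re)
      + (1 / 2) *
        (∑ i, ∑ j, G.adjMatrix ℝ i j * (frobSqC (blk Y i - blk Y j)) ^ 2) ≤ 0) ∧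
    (G.Connected → 3 * r ≤ 2 * p → ∀ i j, blk Y i = blk Y j) := by
  obtain ⟨hF, -, h2⟩ := hY
  subst hLhat
  have h0 := sum_blocks_nonneg _ Y hF h2
  rw [trace_Sb G Y hF] at h0
  rw [lap_sum G (fun i j => (WC (blk Y j) (blk Y i)).trace.re)
    (2 * r * (p - r) + r / 2 * r + 1 / 2 * r ^ 2) (fun i => by
      rw [trace_WC_re _ _ (hF i) (hF i), frob_one_mul _ (hF i), hF i]; simp)] at h0
  have hL := lap_sum G (fun i j => ((blk Y i * (blk Y j)ᴴ).trace).re) r (fun i => by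
    simp [hF i])
  rw [hL] at h0
  have hA0 : ∀ i j, 0 ≤ G.adjMatrix ℝ i j := fun i j => by
    rw [SimpleGraph.adjMatrix_apply]; split_ifs <;> norm_num
  have hmain : (4 * (p : ℝ) - 6 * r) *
        (∑ i, ∑ j, G.lapMatrix ℝ i j * ((blk Y i * (blk Y j)ᴴ).trace).re)
      + (1 / 2) *
        (∑ i, ∑ j, G.adjMatrix ℝ i j * (frobSqC (blk Y i - blk Y j)) ^ 2) ≤ 0 := by
    rw [hL]
    refine le_trans (b := 2 * ((2 * p - r) * ∑ i, ∑ j, G.adjMatrix ℝ i j *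
        (r - (blk Y i * (blk Y j)ᴴ).trace.re)) - 2 * ∑ i, ∑ j, G.adjMatrix ℝ i j *
        ((2 * r * (p - r) + r / 2 * r + 1 / 2 * r ^ 2)
          - (WC (blk Y j) (blk Y i)).trace.re)) ?_ (by linarith)
    simp only [Finset.mul_sum, ← Finset.sum_add_distrib, ← Finset.sum_sub_distrib]
    refine Finset.sum_le_sum fun i _ => Finset.sum_le_sum fun j _ => ?_
    rw [trace_WC_re _ _ (hF j) (hF i), frob_sub _ _ (hF i) (hF j)]
    have e3 : (blk Y i * (blk Y j)ᴴ) = (blk Y j * (blk Y i)ᴴ)ᴴ := by simp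
    have e4 : (blk Y i * (blk Y j)ᴴ).trace.re = (blk Y j * (blk Y i)ᴴ).trace.re := by
      rw [e3, trace_conjTranspose]; simp
    rw [e4]
    have hcs := mul_le_mul_of_nonneg_left (cs_trace (blk Y j * (blk Y i)ᴴ)) (hA0 i j)
    linarith
  refine ⟨hmain, fun hG hp => ?_⟩
  have hp' : (0 : ℝ) ≤ 4 * p - 6 * r := by
    have : (3 * r : ℝ) ≤ 2 * p := by exact_mod_cast hp
    linarith
  have hnn : 0 ≤ ∑ i, ∑ j, G.lapMatrix ℝ i j * ((blk Y i * (blk Y j)ᴴ).trace).re := by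
    rw [hL]
    refine Finset.sum_nonneg fun i _ => Finset.sum_nonneg fun j _ => mul_nonneg (hA0 i j) ?_
    have h3 := frob_sub _ _ (hF i) (hF j)
    have h4 := frob_nonneg (blk Y i - blk Y j)
    linarith
  have hterm : ∀ i j, 0 ≤ G.adjMatrix ℝ i j * (frobSqC (blk Y i - blk Y j)) ^ 2 :=
    fun i j => mul_nonneg (hA0 i j) (sq_nonneg _)
  have hz : ∑ i, ∑ j, G.adjMatrix ℝ i j * (frobSqC (blk Y i - blk Y j)) ^ 2 = 0 := by
    refine le_antisymm ?_ (Finset.sum_nonneg fun i _ => Finset.sum_nonneg fun j _ => hterm i j)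
    have := mul_nonneg hp' hnn
    linarith
  have hadj : ∀ i j, G.Adj i j → blk Y i = blk Y j := by
    intro i j hij
    have h5 := (Finset.sum_eq_zero_iff_of_nonneg
      (fun i _ => Finset.sum_nonneg fun j _ => hterm i j)).1 hz i (Finset.mem_univ _)
    have h6 := (Finset.sum_eq_zero_iff_of_nonneg (fun j _ => hterm i j)).1 h5 j (Finset.mem_univ _)
    rw [SimpleGraph.adjMatrix_apply, if_pos hij, one_mul] at h6
    exact sub_eq_zero.1 (frob_eq_zero _ (pow_eq_zero_iff (two_ne_zero)|>.1 h6))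
  intro i j
  obtain ⟨w⟩ := hG.preconnected i j
  induction w with
  | nil => rfl
  | cons h _ ih => exact (hadj _ _ h).trans ih

end SyncPaper
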